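/- The number of indecomposable Fishburn permutations of size n avoiding the classical pattern 231 equals the Catalan number C_{n−1}. -/

import Mathlib

open Finset

/-- The list of values of a permutation of `Fin n` (0-based values). -/
def permList {n : ℕ} (π : Equiv.Perm (Fin n)) : List ℕ :=
  (List.finRange n).map fun i => (π i : ℕ)

/-- A sequence `w` of distinct integers contains the classical pattern `p`:
some subsequence of `w` is order-isomorphic to `p`. -/
def SeqContains (w p : List ℕ) : Prop :=
  ∃ f : Fin p.length → Fin w.length, StrictMono f ∧
    ∀ i j : Fin p.length, p.get i < p.get j ↔ w.get (f i) < w.get (f j)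

/-- A permutation avoids a classical pattern (given as the list of its values). -/
def AvoidsPat {n : ℕ} (π : Equiv.Perm (Fin n)) (p : List ℕ) : Prop :=
  ¬ SeqContains (permList π) p

/-- `π` is a Fishburn permutation: it avoids the bivincular pattern (231,{1},{1}),
i.e. there are no positions `i < k` with `π i = π k + 1` and `π i < π (i+1)`
(0-based values, so `π i = π k + 1` encodes `π(i) > 1` and `π(k) = π(i) - 1`). -/
def IsFishburn {n : ℕ} (π : Equiv.Perm (Fin n)) : Prop :=
  ∀ i k : ℕ, ∀ hi : i < n, ∀ hk : k < n, ∀ _hik : i < k,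
    (π ⟨i, hi⟩ : ℕ) = (π ⟨k, hk⟩ : ℕ) + 1 →
    ¬ ((π ⟨i, hi⟩ : ℕ) < (π ⟨i + 1, by omega⟩ : ℕ))

/-- A permutation is indecomposable if it is not the direct sum of two nonempty
permutations, i.e. no proper nonempty initial segment of positions maps onto the
corresponding initial segment of values. -/
def IsIndecomposable {n : ℕ} (π : Equiv.Perm (Fin n)) : Prop :=
  ¬ ∃ k : ℕ, 0 < k ∧ k < n ∧ ∀ i : Fin n, (i : ℕ) < k → (π i : ℕ) < k


/-- List version of 231-avoidance. -/
def LAv (l : List ℕ) : Prop := ∀ a b c, [a, b, c].Sublist l → ¬ (c < a ∧ a < b)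

theorem LAv.mono {l l' : List ℕ} (h : LAv l) (hs : l'.Sublist l) : LAv l' :=
  fun a b c hh => h a b c (hh.trans hs)

theorem split_range' {L R : List ℕ} {off n : ℕ} (h : (L ++ R).Perm (List.range' off n))
    (hlt : ∀ a ∈ L, ∀ b ∈ R, a < b) :
    L.Perm (List.range' off L.length) ∧ R.Perm (List.range' (off + L.length) R.length) := by
  have hn : n = L.length + R.length := by
    have := h.length_eq
    simpa using this.symm
  set le : ℕ → ℕ → Bool := fun a b => decide (a ≤ b) with hle
  have pL := List.mergeSort_perm L le
  have pR := List.mergeSort_perm R le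
  have sL : (L.mergeSort le).Pairwise (fun a b => a ≤ b) := by
    have := List.pairwise_mergeSort (le := le) (by simp [hle]; omega) (by simp [hle]; omega) L
    simpa [hle] using this
  have sR : (R.mergeSort le).Pairwise (fun a b => a ≤ b) := by
    have := List.pairwise_mergeSort (le := le) (by simp [hle]; omega) (by simp [hle]; omega) R
    simpa [hle] using this
  have heq : L.mergeSort le ++ R.mergeSort le = List.range' off n := by
    refine List.Perm.eq_of_pairwise (le := fun a b => a ≤ b) ?_ ?_ ?_ ?_
    · intros; omega
    · rw [List.pairwise_append]
      refine ⟨sL, sR, fun a ha b hb => ?_⟩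
      exact (hlt a (pL.mem_iff.1 ha) b (pR.mem_iff.1 hb)).le
    · exact (List.pairwise_lt_range' (s := off) (n := n) 1).imp (fun h => le_of_lt h)
    · exact (pL.append pR).trans h
  rw [hn, ← List.range'_append, one_mul] at heq
  obtain ⟨h1, h2⟩ := List.append_inj heq (by simp)
  exact ⟨h1 ▸ pL.symm, h2 ▸ pR.symm⟩

theorem decomp {l : List ℕ} {off m : ℕ} (h : l.Perm (List.range' off (m + 1))) (hav : LAv l) :
    ∃ L R, l = L ++ (off + m) :: R ∧ L.Perm (List.range' off L.length) ∧
      R.Perm (List.range' (off + L.length) R.length) ∧ LAv L ∧ LAv R ∧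
      L.length + R.length = m := by
  have hm : off + m ∈ l := h.mem_iff.2 (by simp)
  obtain ⟨L, R, rfl⟩ := List.append_of_mem hm
  have hperm : (L ++ R).Perm (List.range' off m) := by
    have h1 : ((off + m) :: (L ++ R)).Perm ((off + m) :: List.range' off m) := by
      refine List.perm_middle.symm.trans (h.trans ?_)
      rw [List.range'_concat, one_mul]
      exact List.perm_append_singleton _ _
    exact h1.cons_inv
  have hnd : (L ++ R).Nodup := hperm.nodup_iff.2 List.nodup_range'
  have hlt : ∀ a ∈ L, ∀ b ∈ R, a < b := by
    intro a ha b hb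
    have hne : a ≠ b := (List.nodup_append.1 hnd).2.2 a ha b hb
    have hlt : a < off + m := by
      have := hperm.mem_iff.1 (List.mem_append_left R ha)
      simp at this; omega
    by_contra hc
    refine hav a (off + m) b ?_ ⟨by omega, hlt⟩
    have h1 : [a].Sublist L := List.singleton_sublist.2 ha
    have h2 : [b].Sublist R := List.singleton_sublist.2 hb
    exact h1.append (h2.cons_cons (off + m))
  obtain ⟨h1, h2⟩ := split_range' hperm hlt
  refine ⟨L, R, rfl, h1, h2, hav.mono (List.sublist_append_left _ _), hav.mono ?_, ?_⟩
  · exact (List.sublist_cons_self _ _).trans (List.sublist_append_right _ _)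
  · simpa using hperm.length_eq

/-- The 231-avoiding word of a binary tree, with values starting from `off`. -/
def word : BinaryTree Unit → ℕ → List ℕ
  | .nil, _ => []
  | .node _ l r, off =>
      word l off ++ (off + (l.numNodes + r.numNodes)) :: word r (off + l.numNodes)

theorem word_length (t : BinaryTree Unit) : ∀ off, (word t off).length = t.numNodes := by
  induction t with
  | nil => intro off; simp [word, BinaryTree.numNodes]
  | node a l r hl hr => intro off; simp [word, BinaryTree.numNodes, hl, hr]; omega

theorem word_perm (t : BinaryTree Unit) :
    ∀ off, (word t off).Perm (List.range' off t.numNodes) := by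
  induction t with
  | nil => intro off; simp [word, BinaryTree.numNodes]
  | node a l r hl hr =>
    intro off
    simp only [word, BinaryTree.numNodes]
    refine List.perm_middle.trans ?_
    rw [List.range'_concat, one_mul]
    refine List.Perm.trans ?_ (List.perm_append_singleton _ _).symm
    refine List.Perm.cons _ ?_
    have := List.range'_append (s := off) (m := l.numNodes) (n := r.numNodes) (step := 1)
    rw [one_mul] at this
    rw [← this]
    exact (hl off).append (hr _)

theorem word_bd {t : BinaryTree Unit} {off x : ℕ} (h : x ∈ word t off) :
    off ≤ x ∧ x < off + t.numNodes := by
  have := (word_perm t off).mem_iff.1 h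
  simpa using this

theorem LAv_cons {m : ℕ} {l : List ℕ} (hl : LAv l) (hm : ∀ x ∈ l, x < m) : LAv (m :: l) := by
  intro a b c h hc
  rw [List.sublist_cons_iff] at h
  rcases h with h | ⟨r, h1, h2⟩
  · exact hl a b c h hc
  · simp at h1
    obtain ⟨rfl, rfl⟩ := h1
    have := hm b (h2.subset (by simp))
    omega

theorem LAv_append {l r : List ℕ} (hl : LAv l) (hr : LAv r) (hlt : ∀ a ∈ l, ∀ b ∈ r, a < b) :
    LAv (l ++ r) := by
  intro a b c h hc
  rw [List.sublist_append_iff] at h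
  obtain ⟨l₁, l₂, he, h1, h2⟩ := h
  rcases l₁ with _ | ⟨x, l₁⟩
  · simp at he; subst he; exact hr a b c h2 hc
  · rcases List.eq_nil_or_concat l₂ with rfl | ⟨l₂, y, rfl⟩
    · simp only [List.append_nil] at he; rw [← he] at h1; exact hl a b c h1 hc
    · have hx : x = a := by simp at he; exact he.1.symm
      have hy : y = c := by
        have he' : [a, b] ++ [c] = ((x :: l₁) ++ l₂) ++ [y] := by simpa using he
        have := (List.append_inj' he' rfl).2
        simpa using this.symm
      have := hlt x (h1.subset (by simp)) y (h2.subset (by simp))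
      omega

theorem word_av (t : BinaryTree Unit) : ∀ off, LAv (word t off) := by
  induction t with
  | nil => intro off a b c h; simp [word] at h
  | node a l r hl hr =>
    intro off
    refine LAv_append (hl off) (LAv_cons (hr _) ?_) ?_
    · intro x hx
      have := word_bd hx; omega
    · intro x hx y hy
      have := word_bd hx
      rcases List.mem_cons.1 hy with rfl | hy
      · omega
      · have := word_bd hy; omega

theorem word_inj (t : BinaryTree Unit) : ∀ t' off, word t off = word t' off → t = t' := by
  induction t with
  | nil =>
    intro t' off h
    cases t' with
    | nil => rfl
    | node => simp [word] at h
  | node a l r hl hr =>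
    intro t' off h
    cases t' with
    | nil => simp [word] at h
    | node b l' r' =>
      have hlen : l.numNodes + r.numNodes = l'.numNodes + r'.numNodes := by
        have := congrArg List.length h
        simpa [word_length, BinaryTree.numNodes] using this
      simp only [word] at h
      rw [List.append_cons_inj_of_notMem] at h
      · obtain ⟨h1, h2, h3⟩ := h
        have e1 := hl _ _ h1
        subst e1
        rw [hr _ _ h3]
      · intro hx; have := word_bd hx; omega
      · intro hx; have := word_bd hx; omega

theorem word_surj : ∀ (m : ℕ) (off : ℕ) (l : List ℕ), l.Perm (List.range' off m) → LAv l →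
    ∃ t : BinaryTree Unit, t.numNodes = m ∧ word t off = l := by
  intro m
  induction m using Nat.strong_induction_on with
  | _ m ih =>
    intro off l hp hav
    rcases m with _ | m
    · refine ⟨.nil, by simp [BinaryTree.numNodes], ?_⟩
      simp at hp; simp [word, hp]
    · obtain ⟨L, R, rfl, hL, hR, aL, aR, hlen⟩ := decomp hp hav
      obtain ⟨t, ht, wt⟩ := ih L.length (by omega) off L hL aL
      obtain ⟨s, hs, ws⟩ := ih R.length (by omega) _ R hR aR
      refine ⟨.node () t s, ?_, ?_⟩
      · simp [BinaryTree.numNodes]; omega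
      · simp only [word, ht, hs, wt, ws, hlen]

theorem permList_length {n : ℕ} (π : Equiv.Perm (Fin n)) : (permList π).length = n := by
  simp [permList]

theorem permList_get {n : ℕ} (π : Equiv.Perm (Fin n)) (i : ℕ) (h : i < (permList π).length) :
    (permList π)[i] = π ⟨i, by simpa [permList] using h⟩ := by
  simp [permList]

theorem permList_inj {n : ℕ} : Function.Injective (permList (n := n)) := by
  intro π σ h
  ext i
  have := List.map_inj_left.1 h i (by simp)
  exact this

theorem permList_perm {n : ℕ} (π : Equiv.Perm (Fin n)) : (permList π).Perm (List.range' 0 n) := by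
  refine (List.perm_ext_iff_of_nodup ?_ List.nodup_range').2 ?_
  · refine List.Nodup.map ?_ (List.nodup_finRange n)
    intro i j h
    exact π.injective (Fin.ext h)
  · intro a
    simp only [permList, List.mem_map, List.mem_finRange, true_and, List.mem_range'_1]
    constructor
    · rintro ⟨i, rfl⟩; omega
    · intro h
      exact ⟨π.symm ⟨a, by omega⟩, by simp⟩

theorem exists_permList {n : ℕ} {l : List ℕ} (h : l.Perm (List.range' 0 n)) :
    ∃ π : Equiv.Perm (Fin n), permList π = l := by
  have hlen : l.length = n := by simpa using h.length_eq
  have hlt : ∀ i : Fin n, l[(i : ℕ)]'(by omega) < n := by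
    intro i
    have := h.mem_iff.1 (List.getElem_mem (l := l) (n := i) (by omega))
    simpa using this
  have hnd : l.Nodup := h.nodup_iff.2 List.nodup_range'
  let f : Fin n → Fin n := fun i => ⟨l[(i : ℕ)]'(by omega), hlt i⟩
  have hf : Function.Injective f := by
    intro i j hij
    have h1 := congrArg Fin.val hij
    exact Fin.ext ((hnd.getElem_inj_iff).1 h1)
  refine ⟨Equiv.ofBijective f (Finite.injective_iff_bijective.1 hf), ?_⟩
  apply List.ext_getElem
  · simp [permList, hlen]
  · intro i h1 h2
    rw [permList_get]
    rfl

theorem avoids_iff {n : ℕ} (π : Equiv.Perm (Fin n)) :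
    AvoidsPat π [2, 3, 1] ↔ LAv (permList π) := by
  unfold AvoidsPat LAv SeqContains
  constructor
  · intro h a b c hs hc
    apply h
    obtain ⟨f, hf⟩ := List.sublist_iff_exists_fin_orderEmbedding_get_eq.1 hs
    have h0 := hf (0 : Fin 3)
    have h1 := hf (1 : Fin 3)
    have h2 := hf (2 : Fin 3)
    refine ⟨f, f.strictMono, ?_⟩
    intro i j
    change Fin 3 at i j
    rw [← hf i, ← hf j]
    fin_cases i <;> fin_cases j <;> simp <;> omega
  · rintro h ⟨f, hf, hp⟩
    refine h ((permList π).get (f (0 : Fin 3))) ((permList π).get (f (1 : Fin 3)))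
      ((permList π).get (f (2 : Fin 3))) ?_ ⟨?_, ?_⟩
    · rw [List.sublist_iff_exists_fin_orderEmbedding_get_eq]
      refine ⟨OrderEmbedding.ofStrictMono f hf, ?_⟩
      intro i
      change Fin 3 at i
      fin_cases i <;> rfl
    · exact (hp (2 : Fin 3) (0 : Fin 3)).1 (by simp)
    · exact (hp (0 : Fin 3) (1 : Fin 3)).1 (by simp)

theorem fishburn_of_avoids {n : ℕ} (π : Equiv.Perm (Fin n)) (h : AvoidsPat π [2, 3, 1]) :
    IsFishburn π := by
  intro i k hi hk hik he hlt
  rw [avoids_iff] at h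
  have hne : i + 1 ≠ k := by
    rintro rfl
    omega
  have hs : [(⟨i, hi⟩ : Fin n), ⟨i + 1, by omega⟩, ⟨k, hk⟩].Sublist (List.finRange n) := by
    refine List.sublist_of_subperm_of_pairwise (r := (· < ·)) ?_ ?_ ?_
    · apply List.Nodup.subperm
      · simp; omega
      · intro x _; simp
    · simp; omega
    · exact List.pairwise_lt_finRange n
  exact h _ _ _ (hs.map (fun i => (π i : ℕ))) ⟨by dsimp only; omega, hlt⟩

theorem main_image (m : ℕ) :
    Set.image permList {π : Equiv.Perm (Fin (m + 1)) |
        IsIndecomposable π ∧ IsFishburn π ∧ AvoidsPat π [2, 3, 1]} =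
      Set.image (fun t => m :: word t 0) (BinaryTree.treesOfNumNodesEq m : Set (BinaryTree Unit)) := by
  ext l
  simp only [Set.mem_image, Set.mem_ofPred_eq, Finset.mem_coe, BinaryTree.mem_treesOfNumNodesEq]
  constructor
  · rintro ⟨π, ⟨hi, -, hav⟩, rfl⟩
    rw [avoids_iff] at hav
    obtain ⟨L, R, he, hL, hR, aL, aR, hlen⟩ := decomp (permList_perm π) hav
    have hnil : L = [] := by
      by_contra hne
      have hpos : 0 < L.length := List.length_pos_iff.2 hne
      refine hi ⟨L.length, hpos, by omega, ?_⟩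
      intro i hiL
      have h1 : (π i : ℕ) ∈ L := by
        have h2 := permList_get π i (by rw [permList_length]; exact i.2)
        simp only [he, List.getElem_append_left hiL] at h2
        have h3 := List.getElem_mem hiL
        rw [h2] at h3
        exact h3
      have := hL.mem_iff.1 h1
      simpa using this
    subst hnil
    simp at hR hlen
    rw [hlen] at hR
    obtain ⟨t, ht, wt⟩ := word_surj m 0 R hR aR
    refine ⟨t, ht, ?_⟩
    rw [he, wt]; simp
  · rintro ⟨t, ht, rfl⟩
    have hp : (m :: word t 0).Perm (List.range' 0 (m + 1)) := by
      rw [List.range'_concat]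
      refine List.Perm.trans ?_ (List.perm_append_singleton _ _).symm
      simp only [zero_add, one_mul]
      exact (ht ▸ word_perm t 0).cons _
    obtain ⟨π, hπ⟩ := exists_permList hp
    have hav : AvoidsPat π [2, 3, 1] := by
      rw [avoids_iff, hπ]
      refine LAv_cons (word_av t 0) ?_
      intro x hx
      have := word_bd hx; omega
    refine ⟨π, ⟨?_, fishburn_of_avoids π hav, hav⟩, hπ⟩
    rintro ⟨k, hk0, hkn, hk⟩
    have h1 := hk 0 (by simpa using hk0)
    have h2 := permList_get π 0 (by rw [permList_length]; omega)
    simp only [hπ, List.getElem_cons_zero] at h2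
    have h3 : (π 0 : ℕ) = m := h2.symm
    omega

theorem stmt14 (n : ℕ) (hn : 1 ≤ n) :
    Nat.card {π : Equiv.Perm (Fin n) //
        IsIndecomposable π ∧ IsFishburn π ∧ AvoidsPat π [2, 3, 1]} =
      catalan (n - 1) := by
  obtain ⟨m, rfl⟩ : ∃ m, n = m + 1 := ⟨n - 1, by omega⟩
  rw [Nat.add_sub_cancel, ← BinaryTree.treesOfNumNodesEq_card_eq_catalan, ← Set.ncard_coe_finset]
  have h1 : (fun t => m :: word t 0).Injective := by
    intro t t' h
    simp at h
    exact word_inj _ _ _ h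
  rw [← Set.ncard_image_of_injective _ h1, ← main_image,
    Set.ncard_image_of_injective _ permList_inj]
  rfl
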